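/- arXiv:1910.07164 — 4 statements merged into one kernel-verified Lean document; each statement's English description precedes it below -/
import Mathlib

section
/- For every positive integer k there exists a constant C_k such that for all positive integers L one has ∑_{g ∣ L} (log g / g) · k^{ω(g)} ≤ C_k · (log log (L + 2))^{k+1}, where the sum runs over all positive divisors g of L and ω(g) denotes the number of distinct prime divisors of g. -/
open ArithmeticFunction in
theorem mertens_one (n : ℕ) (hn : 0 < n) :
    ∑ d ∈ Finset.Ioc 0 n, vonMangoldt d / d ≤ Real.log n + (Real.log 4 + 4) := by
  have h1 := sum_Ioc_mul_zeta_eq_sum vonMangoldt n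
  rw [vonMangoldt_mul_zeta] at h1
  have hn' : (0:ℝ) < n := by exact_mod_cast hn
  have h2 : ∑ m ∈ Finset.Ioc 0 n, ArithmeticFunction.log m ≤ n * Real.log n := by
    calc _ ≤ ∑ m ∈ Finset.Ioc 0 n, Real.log n := by
          apply Finset.sum_le_sum
          intro m hm
          rw [Finset.mem_Ioc] at hm
          rw [log_apply]
          apply Real.log_le_log
          · exact_mod_cast hm.1
          · exact_mod_cast hm.2
      _ = _ := by simp
  have h3 := Chebyshev.psi_le_const_mul_self (x := (n:ℝ)) (by positivity)
  rw [Chebyshev.psi, Nat.floor_natCast] at h3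
  have h4 : ∑ d ∈ Finset.Ioc 0 n, vonMangoldt d * ((n:ℝ) / d - 1) ≤ n * Real.log n := by
    refine le_trans ?_ (h1 ▸ h2)
    apply Finset.sum_le_sum
    intro d hd
    apply mul_le_mul_of_nonneg_left _ vonMangoldt_nonneg
    have := Nat.lt_floor_add_one ((n:ℝ)/d)
    rw [Nat.floor_div_natCast, Nat.floor_natCast] at this
    linarith
  have h5 : ∑ d ∈ Finset.Ioc 0 n, vonMangoldt d * ((n:ℝ) / d - 1)
      = n * (∑ d ∈ Finset.Ioc 0 n, vonMangoldt d / d) - ∑ d ∈ Finset.Ioc 0 n, vonMangoldt d := by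
    rw [Finset.mul_sum, ← Finset.sum_sub_distrib]
    apply Finset.sum_congr rfl
    intros; ring
  rw [h5] at h4
  have : (n:ℝ) * (∑ d ∈ Finset.Ioc 0 n, vonMangoldt d / d) ≤ n * (Real.log n + (Real.log 4 + 4)) := by
    linarith
  exact le_of_mul_le_mul_left this hn'

open ArithmeticFunction in
theorem mertens_two_aux (K : ℝ)
    (hK : ∀ n : ℕ, 0 < n → ∑ d ∈ Finset.Ioc 0 n, vonMangoldt d / d ≤ Real.log n + K)
    (n : ℕ) (hn : 2 ≤ n) :
    ∑ d ∈ Finset.Ioc 0 n, vonMangoldt d / d / Real.log d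
      - (∑ d ∈ Finset.Ioc 0 n, vonMangoldt d / d) / Real.log n ≤
    Real.log (Real.log n) - K / Real.log n + (K / Real.log 2 - Real.log (Real.log 2)) := by
  induction n, hn using Nat.le_induction with
  | base =>
    have : Finset.Ioc 0 2 = {1, 2} := by decide
    simp [this]
  | succ n hn ih =>
    rw [Finset.sum_Ioc_succ_top (by omega), Finset.sum_Ioc_succ_top (by omega)]
    have hA := hK n (by omega)
    set S := ∑ d ∈ Finset.Ioc 0 n, vonMangoldt d / d / Real.log d
    set A := ∑ d ∈ Finset.Ioc 0 n, vonMangoldt d / d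
    set a : ℝ := vonMangoldt (n+1) / ((n+1 : ℕ) : ℝ)
    have hx : 0 < Real.log n := Real.log_pos (by exact_mod_cast (by omega : 1 < n))
    have hxy : Real.log n < Real.log (n+1 : ℕ) :=
      Real.log_lt_log (by exact_mod_cast (by omega : 0 < n)) (by push_cast; linarith)
    set x := Real.log n
    set y := Real.log (n+1 : ℕ)
    have hy : 0 < y := hx.trans hxy
    have h1 : A * (1/x - 1/y) ≤ (x + K) * (1/x - 1/y) := by
      apply mul_le_mul_of_nonneg_right hA
      have := one_div_lt_one_div_of_lt hx hxy
      linarith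
    have h2 : 1 - x / y ≤ Real.log y - Real.log x := by
      have := Real.log_le_sub_one_of_pos (div_pos hx hy)
      rw [Real.log_div hx.ne' hy.ne'] at this
      linarith
    have h3 : (x + K) * (1/x - 1/y) = 1 - x / y + (K / x - K / y) := by
      field_simp
    have h4 : S + a / y - (A + a) / y = (S - A / x) + A * (1/x - 1/y) := by ring
    rw [h4]
    linarith

open ArithmeticFunction in
theorem mertens_two : ∃ D : ℝ, 0 ≤ D ∧ ∀ n : ℕ, 2 ≤ n →
    ∑ d ∈ Finset.Ioc 0 n, vonMangoldt d / d / Real.log d ≤ Real.log (Real.log n) + D := by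
  refine ⟨max 0 (((Real.log 4 + 4) / Real.log 2 - Real.log (Real.log 2)) + 1), le_max_left _ _, ?_⟩
  intro n hn
  have h1 := mertens_two_aux _ mertens_one n hn
  have h2 := mertens_one n (by omega)
  have hx : 0 < Real.log n := Real.log_pos (by exact_mod_cast (by omega : 1 < n))
  have h3 := div_le_div_of_nonneg_right h2 hx.le
  rw [add_div, div_self hx.ne'] at h3
  have := le_max_right 0 (((Real.log 4 + 4) / Real.log 2 - Real.log (Real.log 2)) + 1)
  linarith

open ArithmeticFunction in
/-- Splitting divisors of `L` at `N ≥ log L`. -/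
theorem sum_div_split (L N : ℕ) (hL : 0 < L) (hN : Real.log L ≤ N) (hN0 : 0 < N)
    (w : ℕ → ℝ) (c : ℝ) (hc : 0 ≤ c) (hw0 : ∀ d, 0 ≤ w d) (hw : ∀ d, w d ≤ c) :
    ∑ d ∈ L.divisors, vonMangoldt d / d * w d ≤
      ∑ d ∈ Finset.Ioc 0 N, vonMangoldt d / d * w d + c := by
  have hnn : ∀ d : ℕ, 0 ≤ vonMangoldt d / d * w d := fun d =>
    mul_nonneg (div_nonneg vonMangoldt_nonneg (Nat.cast_nonneg d)) (hw0 d)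
  have hN' : (0:ℝ) < N := by exact_mod_cast hN0
  rw [← Finset.sum_filter_add_sum_filter_not L.divisors (fun d => d ≤ N)]
  apply add_le_add
  · apply Finset.sum_le_sum_of_subset_of_nonneg
    · intro d hd
      simp only [Finset.mem_filter, Nat.mem_divisors, Finset.mem_Ioc] at hd ⊢
      exact ⟨Nat.pos_of_dvd_of_pos hd.1.1 hL, hd.2⟩
    · intro d _ _
      exact hnn d
  · calc _ ≤ ∑ d ∈ L.divisors with ¬ d ≤ N, vonMangoldt d * (c / N) := by
          apply Finset.sum_le_sum
          intro d hd
          simp only [Finset.mem_filter, not_le] at hd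
          have hd' : (N:ℝ) ≤ d := by exact_mod_cast hd.2.le
          rw [div_mul_eq_mul_div, mul_div_assoc]
          apply mul_le_mul_of_nonneg_left _ vonMangoldt_nonneg
          exact div_le_div₀ hc (hw d) hN' hd'
      _ ≤ ∑ d ∈ L.divisors, vonMangoldt d * (c / N) := by
          apply Finset.sum_le_sum_of_subset_of_nonneg (Finset.filter_subset _ _)
          intro d _ _
          exact mul_nonneg vonMangoldt_nonneg (by positivity)
      _ = Real.log L * (c / N) := by rw [← Finset.sum_mul, vonMangoldt_sum]
      _ ≤ N * (c / N) := by gcongr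
      _ = c := by field_simp

theorem sum_inv_mul_pred (s : Finset ℕ) (hs : ∀ p ∈ s, 2 ≤ p) :
    ∑ p ∈ s, 1 / ((p:ℝ) * (p - 1)) ≤ 1 := by
  have key : ∀ n : ℕ, 1 ≤ n → ∑ p ∈ Finset.Ioc 1 n, 1 / ((p:ℝ) * (p - 1)) = 1 - 1 / n := by
    intro n hn
    induction n, hn using Nat.le_induction with
    | base => simp
    | succ n hn ih =>
      rw [Finset.sum_Ioc_succ_top hn, ih]
      have : (n:ℝ) ≠ 0 := by positivity
      have : (n:ℝ) + 1 ≠ 0 := by positivity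
      push_cast
      rw [add_sub_cancel_right]
      field_simp
      ring
  have hsub : s ⊆ Finset.Ioc 1 (s.sup id + 1) := by
    intro p hp
    have := Finset.le_sup (f := id) hp
    have := hs p hp
    simp only [Finset.mem_Ioc, id] at *
    omega
  calc _ ≤ ∑ p ∈ Finset.Ioc 1 (s.sup id + 1), 1 / ((p:ℝ) * (p - 1)) := by
        apply Finset.sum_le_sum_of_subset_of_nonneg hsub
        intro p hp _
        have : 1 < p := (Finset.mem_Ioc.1 hp).1
        have : (1:ℝ) < p := by exact_mod_cast this
        apply div_nonneg zero_le_one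
        apply mul_nonneg <;> linarith
    _ ≤ 1 := by
        rw [key _ (by omega)]
        have : (0:ℝ) ≤ 1 / ((s.sup id + 1 : ℕ) : ℝ) := by positivity
        linarith

open ArithmeticFunction in
theorem sum_inv_pred (L : ℕ) (hL : 0 < L) :
    ∑ p ∈ L.primeFactors, 1 / ((p:ℝ) - 1) ≤
      ∑ d ∈ L.divisors, vonMangoldt d / d * (Real.log d)⁻¹ + 1 := by
  have h1 := sum_inv_mul_pred L.primeFactors (fun p hp => (Nat.prime_of_mem_primeFactors hp).two_le)
  have h2 : ∑ p ∈ L.primeFactors, 1 / (p:ℝ) ≤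
      ∑ d ∈ L.divisors, vonMangoldt d / d * (Real.log d)⁻¹ := by
    calc _ = ∑ d ∈ L.primeFactors, vonMangoldt d / d * (Real.log d)⁻¹ := by
          apply Finset.sum_congr rfl
          intro p hp
          have hp := Nat.prime_of_mem_primeFactors hp
          rw [vonMangoldt_apply_prime hp]
          have : 0 < Real.log p := Real.log_pos (by exact_mod_cast hp.one_lt)
          field_simp
      _ ≤ _ := by
          apply Finset.sum_le_sum_of_subset_of_nonneg
          · intro p hp
            exact Nat.mem_divisors.2 ⟨Nat.dvd_of_mem_primeFactors hp, hL.ne'⟩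
          · intro d _ _
            exact mul_nonneg (div_nonneg vonMangoldt_nonneg (Nat.cast_nonneg d))
              (inv_nonneg.2 (Real.log_natCast_nonneg d))
  have h3 : ∑ p ∈ L.primeFactors, 1 / ((p:ℝ) - 1) =
      ∑ p ∈ L.primeFactors, 1 / (p:ℝ) + ∑ p ∈ L.primeFactors, 1 / ((p:ℝ) * (p - 1)) := by
    rw [← Finset.sum_add_distrib]
    apply Finset.sum_congr rfl
    intro p hp
    have hp : (1:ℝ) < p := by exact_mod_cast (Nat.prime_of_mem_primeFactors hp).one_lt
    have : (p:ℝ) - 1 ≠ 0 := by linarith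
    field_simp
    ring
  linarith

/-- `k ^ ω(g) / g` as an arithmetic function. -/
noncomputable def wfun (k : ℕ) : ArithmeticFunction ℝ :=
  ⟨fun g => (k:ℝ) ^ g.primeFactors.card / g, by simp⟩

theorem wfun_apply (k g : ℕ) : wfun k g = (k:ℝ) ^ g.primeFactors.card / g := rfl

theorem wfun_nonneg (k g : ℕ) : 0 ≤ wfun k g := by
  rw [wfun_apply]; positivity

theorem wfun_mul_le (k : ℕ) (hk : 0 < k) (a b : ℕ) : wfun k (a * b) ≤ wfun k a * wfun k b := by
  simp only [wfun_apply]
  rcases Nat.eq_zero_or_pos a with rfl | ha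
  · simp
  rcases Nat.eq_zero_or_pos b with rfl | hb
  · simp
  rw [div_mul_div_comm, ← pow_add, Nat.cast_mul]
  apply div_le_div_of_nonneg_right _ (by positivity)
  apply pow_le_pow_right₀ (by exact_mod_cast hk)
  rw [Nat.primeFactors_mul ha.ne' hb.ne']
  exact Finset.card_union_le _ _

theorem wfun_mult (k : ℕ) : (wfun k).IsMultiplicative := by
  refine ⟨by simp [wfun_apply], ?_⟩
  intro a b hab
  simp only [wfun_apply]
  rw [hab.primeFactors_mul, Finset.card_union_of_disjoint hab.disjoint_primeFactors,
    div_mul_div_comm, ← pow_add, Nat.cast_mul]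

open ArithmeticFunction ArithmeticFunction.zeta in
theorem wsum_le (k L : ℕ) (hL : 0 < L) :
    (wfun k * (ζ : ArithmeticFunction ℝ)) L ≤
      Real.exp (k * ∑ p ∈ L.primeFactors, 1 / ((p:ℝ) - 1)) := by
  have hm : (wfun k * (ζ : ArithmeticFunction ℝ)).IsMultiplicative :=
    (wfun_mult k).mul isMultiplicative_zeta.natCast
  rw [hm.multiplicative_factorization _ hL.ne', Finset.mul_sum, Real.exp_sum, Finsupp.prod,
    Nat.support_factorization]
  apply Finset.prod_le_prod
  · intro p hp
    rw [coe_mul_zeta_apply]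
    exact Finset.sum_nonneg fun _ _ => wfun_nonneg _ _
  · intro p hp
    have hp := Nat.prime_of_mem_primeFactors hp
    have hp1 : (1:ℝ) < p := by exact_mod_cast hp.one_lt
    rw [coe_mul_zeta_apply, Nat.sum_divisors_prime_pow hp, Finset.sum_range_succ']
    have h1 : ∀ i, wfun k (p ^ (i+1)) = k * (1 / (p:ℝ)) ^ (i+1) := by
      intro i
      rw [wfun_apply, Nat.primeFactors_prime_pow (by omega) hp]
      simp [div_eq_mul_inv]
    simp only [h1, ← Finset.mul_sum]
    have h2 : wfun k (p ^ 0) = 1 := by simp [wfun_apply]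
    rw [h2]
    have h3 : ∀ n, ∑ i ∈ Finset.range n, (1 / (p:ℝ)) ^ (i+1) ≤ 1 / ((p:ℝ) - 1) := by
      intro n
      have : ∑ i ∈ Finset.range n, (1 / (p:ℝ)) ^ (i+1) =
          (1 - (1 / (p:ℝ)) ^ n) / ((p:ℝ) - 1) := by
        have : (p:ℝ) - 1 ≠ 0 := by linarith
        induction n with
        | zero => simp
        | succ n ih =>
          rw [Finset.sum_range_succ, ih, pow_succ]
          field_simp
          ring
      rw [this]
      apply div_le_div_of_nonneg_right _ (by linarith)
      have : 0 ≤ (1 / (p:ℝ)) ^ n := by positivity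
      linarith
    calc _ ≤ (k:ℝ) * (1 / ((p:ℝ) - 1)) + 1 := by gcongr; exact h3 _
      _ ≤ _ := Real.add_one_le_exp _

open ArithmeticFunction ArithmeticFunction.zeta in
theorem main_split (k L : ℕ) (hk : 0 < k) (hL : 0 < L) :
    ∑ g ∈ L.divisors, (Real.log g / g) * (k : ℝ) ^ g.primeFactors.card ≤
      (k * ∑ d ∈ L.divisors, vonMangoldt d / d) * (wfun k * (ζ : ArithmeticFunction ℝ)) L := by
  set F : ArithmeticFunction ℝ := vonMangoldt.pmul (wfun k) with hF
  have hFnn : ∀ d, 0 ≤ F d := fun d => mul_nonneg vonMangoldt_nonneg (wfun_nonneg _ _)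
  have h1 : ∑ g ∈ L.divisors, (Real.log g / g) * (k : ℝ) ^ g.primeFactors.card ≤
      ∑ g ∈ L.divisors, (F * wfun k) g := by
    apply Finset.sum_le_sum
    intro g hg
    have : (Real.log g / g) * (k : ℝ) ^ g.primeFactors.card = ArithmeticFunction.log g * wfun k g := by
      rw [log_apply, wfun_apply]; ring
    rw [this, ← vonMangoldt_mul_zeta, mul_apply, mul_apply, Finset.sum_mul]
    apply Finset.sum_le_sum
    rintro ⟨a, b⟩ hab
    rw [Nat.mem_divisorsAntidiagonal] at hab
    obtain ⟨hab, hg0⟩ := hab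
    simp only at hab
    subst hab
    have hb : b ≠ 0 := right_ne_zero_of_mul hg0
    simp only [natCoe_apply, zeta_apply_ne hb, hF, pmul_apply, Nat.cast_one, mul_one]
    rw [mul_assoc]
    exact mul_le_mul_of_nonneg_left (wfun_mul_le k hk a b) vonMangoldt_nonneg
  refine h1.trans ?_
  rw [← coe_mul_zeta_apply, mul_assoc, mul_apply, Nat.sum_divisorsAntidiagonal
    (fun a b => F a * (wfun k * (ζ : ArithmeticFunction ℝ)) b), Finset.mul_sum, Finset.sum_mul]
  apply Finset.sum_le_sum
  intro d hd
  have h2 : F d ≤ k * (vonMangoldt d / d) := by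
    simp only [hF, pmul_apply]
    by_cases hpp : IsPrimePow d
    · obtain ⟨p, n, hp, hn, rfl⟩ := hpp
      rw [wfun_apply, Nat.primeFactors_prime_pow hn.ne' hp.nat_prime, Finset.card_singleton]
      apply le_of_eq
      ring
    · rw [vonMangoldt_eq_zero_iff.2 hpp]; simp
  have h3 : (wfun k * (ζ : ArithmeticFunction ℝ)) (L / d) ≤
      (wfun k * (ζ : ArithmeticFunction ℝ)) L := by
    rw [coe_mul_zeta_apply, coe_mul_zeta_apply]
    apply Finset.sum_le_sum_of_subset_of_nonneg
    · exact Nat.divisors_subset_of_dvd hL.ne' (Nat.div_dvd_of_dvd (Nat.dvd_of_mem_divisors hd))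
    · intro i _ _
      exact wfun_nonneg _ _
  apply mul_le_mul h2 h3
  · rw [coe_mul_zeta_apply]
    exact Finset.sum_nonneg fun _ _ => wfun_nonneg _ _
  · exact (hFnn d).trans h2

theorem sum_divisors_log_pow_omega_le (k : ℕ) (hk : 0 < k) :
    ∃ C : ℝ, ∀ L : ℕ, 0 < L →
      ∑ g ∈ L.divisors, (Real.log g / g) * (k : ℝ) ^ g.primeFactors.card ≤
        C * (Real.log (Real.log ((L : ℝ) + 2))) ^ (k + 1) := by
  obtain ⟨D, hD0, hD⟩ := mertens_two
  set K : ℝ := Real.log 4 + 4 with hK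
  have hK0 : 0 < K := by
    have : 0 < Real.log 4 := Real.log_pos (by norm_num)
    linarith
  have hl3 : 1 < Real.log 3 := by
    rw [Real.lt_log_iff_exp_lt (by norm_num)]
    exact Real.exp_one_lt_d9.trans (by norm_num)
  set l0 := Real.log (Real.log 3) with hl0
  have hl0p : 0 < l0 := Real.log_pos hl3
  have hlog2 : 0 < Real.log 2 := Real.log_pos (by norm_num)
  set E : ℝ := D + (Real.log 2)⁻¹ + 1 with hE
  set c1 : ℝ := 1 + Real.log 2 / l0 with hc1
  set c2 : ℝ := 1 + (Real.log 2 + K + 1) / l0 with hc2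
  refine ⟨k * c2 * (c1 ^ k * Real.exp (k * E)), ?_⟩
  intro L hL
  have hL1 : (1:ℝ) ≤ L := by exact_mod_cast hL
  set M := Real.log ((L:ℝ) + 2) with hM
  have hM3 : Real.log 3 ≤ M := Real.log_le_log (by norm_num) (by linarith)
  have hM1 : 1 < M := hl3.trans_le hM3
  set l := Real.log M with hl
  have hll : l0 ≤ l := Real.log_le_log (by linarith) hM3
  have hgen : ∀ a : ℝ, 0 ≤ a → l + a ≤ (1 + a / l0) * l := by
    intro a ha
    have : a ≤ a / l0 * l := by
      rw [div_mul_eq_mul_div, le_div_iff₀ hl0p]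
      exact mul_le_mul_of_nonneg_left hll ha
    linarith
  set N := ⌈M⌉₊ with hNdef
  have hMN : M ≤ N := Nat.le_ceil M
  have hNM : (N:ℝ) < M + 1 := Nat.ceil_lt_add_one (by linarith)
  have hN2 : 2 ≤ N := by
    have : (1:ℝ) < N := by linarith
    have : 1 < N := by exact_mod_cast this
    omega
  have hLN : Real.log L ≤ N := by
    refine le_trans ?_ hMN
    exact Real.log_le_log (by linarith) (by linarith)
  have hlogN : Real.log N ≤ l + Real.log 2 := by
    rw [hl, ← Real.log_mul (by linarith) (by norm_num)]
    exact Real.log_le_log (by linarith) (by linarith)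
  have hlogNpos : 0 < Real.log N := Real.log_pos (by linarith)
  -- von Mangoldt sum
  have hW : ∑ d ∈ L.divisors, ArithmeticFunction.vonMangoldt d / d ≤ c2 * l := by
    have h1 := sum_div_split L N hL hLN (by omega) (fun _ => 1) 1 zero_le_one
      (fun _ => zero_le_one) (fun _ => le_rfl)
    simp only [mul_one] at h1
    have h2 := mertens_one N (by omega)
    have h3 := hgen (Real.log 2 + K + 1) (by linarith)
    linarith
  have hP : ∑ p ∈ L.primeFactors, 1 / ((p:ℝ) - 1) ≤ Real.log (Real.log N) + E := by
    have h1 := sum_div_split L N hL hLN (by omega) (fun d => (Real.log d)⁻¹) (Real.log 2)⁻¹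
      (by positivity) (fun d => inv_nonneg.2 (Real.log_natCast_nonneg d)) (by
        intro d
        rcases Nat.lt_or_ge d 2 with h | h
        · interval_cases d <;> simp <;> positivity
        · apply inv_anti₀ hlog2
          exact Real.log_le_log (by norm_num) (by exact_mod_cast h))
    have h2 := sum_inv_pred L hL
    have h3 := hD N hN2
    simp only [div_eq_mul_inv _ (Real.log _)] at h3
    linarith
  have hH : (wfun k * (ArithmeticFunction.zeta : ArithmeticFunction ℝ)) L ≤
      (c1 * l) ^ k * Real.exp (k * E) := by
    refine (wsum_le k L hL).trans ?_
    calc _ ≤ Real.exp (k * (Real.log (Real.log N) + E)) := by gcongr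
      _ = (Real.log N) ^ k * Real.exp (k * E) := by
          rw [mul_add, Real.exp_add, Real.exp_nat_mul, Real.exp_log hlogNpos]
      _ ≤ _ := by
          gcongr
          exact hlogN.trans (hgen _ hlog2.le)
  have hl0' : 0 < l := hl0p.trans_le hll
  refine (main_split k L hk hL).trans ?_
  calc _ ≤ (k * (c2 * l)) * ((c1 * l) ^ k * Real.exp (k * E)) := by
        apply mul_le_mul _ hH
        · rw [ArithmeticFunction.coe_mul_zeta_apply]
          exact Finset.sum_nonneg fun _ _ => wfun_nonneg _ _
        · positivity
        · gcongr
    _ = _ := by rw [mul_pow, pow_succ]; ring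
end

section
/- Let N, f, f', q₁, q₂, K be positive integers with f ∣ N, f' ∣ N, q₁ ∣ N/f, q₂ ∣ f, and K ∣ N, and suppose that for every prime p: if p ∣ q₁ then ν_p(K) ≤ ν_p(f) − ν_p(q₂), and if p ∣ q₂ but p ∤ q₁ then ν_p(K) ≤ ν_p(N) − ν_p(q₂). If q₂ ∣ f' and for every prime p dividing q₁ one has ν_p(f') ≤ ν_p(q₂) + ν_p(K), then lcm(q₁, q₂) divides lcm(f', N/f'). -/
/-- The 'former case' of Lemma 3.12: with `f ∣ N`, `f' ∣ N`, `q₁ ∣ N/f`, `q₂ ∣ f`, `K ∣ N`,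
and the valuation restrictions on `K`, if `q₂ ∣ f'` and `ν_p(f') ≤ ν_p(q₂) + ν_p(K)` for
every prime `p ∣ q₁`, then `lcm(q₁, q₂) ∣ lcm(f', N/f')`. -/
theorem lcm_dvd_lcm_of_former_case
    (N f f' q₁ q₂ K : ℕ) (hN : 0 < N) (hf : 0 < f) (hf' : 0 < f')
    (hq₁ : 0 < q₁) (hq₂ : 0 < q₂) (hK : 0 < K)
    (hfN : f ∣ N) (hf'N : f' ∣ N) (hq₁N : q₁ ∣ N / f) (hq₂f : q₂ ∣ f) (hKN : K ∣ N)
    (hK₁ : ∀ p : ℕ, p.Prime → p ∣ q₁ →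
      (K.factorization p : ℤ) ≤ (f.factorization p : ℤ) - (q₂.factorization p : ℤ))
    (hK₂ : ∀ p : ℕ, p.Prime → p ∣ q₂ → ¬p ∣ q₁ →
      (K.factorization p : ℤ) ≤ (N.factorization p : ℤ) - (q₂.factorization p : ℤ))
    (hq₂f' : q₂ ∣ f')
    (hval : ∀ p : ℕ, p.Prime → p ∣ q₁ →
      f'.factorization p ≤ q₂.factorization p + K.factorization p) :
    Nat.lcm q₁ q₂ ∣ Nat.lcm f' (N / f') := by
  have hpos : N / f' ≠ 0 := (Nat.div_pos (Nat.le_of_dvd hN hf'N) hf').ne'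
  have hposf : N / f ≠ 0 := (Nat.div_pos (Nat.le_of_dvd hN hfN) hf).ne'
  have key : q₁ ∣ N / f' := by
    rw [← Nat.factorization_prime_le_iff_dvd hq₁.ne' hpos]
    intro p hp
    by_cases hpq : p ∣ q₁
    · have h1 := hK₁ p hp hpq
      have h2 := hval p hp hpq
      have h3 := (Nat.factorization_prime_le_iff_dvd hq₁.ne' hposf).2 hq₁N p hp
      rw [Nat.factorization_div hfN, Finsupp.tsub_apply] at h3
      rw [Nat.factorization_div hf'N, Finsupp.tsub_apply]
      omega
    · rw [Nat.factorization_eq_zero_of_not_dvd hpq]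
      exact Nat.zero_le _
  exact Nat.lcm_dvd (key.trans (Nat.dvd_lcm_right _ _)) (hq₂f'.trans (Nat.dvd_lcm_left _ _))
end

section
/- Let N, f, f', q₁, q₂, K be positive integers with f ∣ N, f' ∣ N, q₁ ∣ N/f, q₂ ∣ f, and K ∣ N, and suppose that for every prime p: if p ∣ q₁ then ν_p(K) ≤ ν_p(f) − ν_p(q₂), and if p ∣ q₂ but p ∤ q₁ then ν_p(K) ≤ ν_p(N) − ν_p(q₂). If q₁ ∣ f' and for every prime p dividing q₂ one has ν_p(f') ≤ ν_p(q₁) + ν_p(K), then lcm(q₁, q₂) divides lcm(f', N/f'). -/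
/-- The 'latter case' of Lemma 3.12: with `f ∣ N`, `f' ∣ N`, `q₁ ∣ N/f`, `q₂ ∣ f`, `K ∣ N`,
and the valuation restrictions on `K`, if `q₁ ∣ f'` and `ν_p(f') ≤ ν_p(q₁) + ν_p(K)` for
every prime `p ∣ q₂`, then `lcm(q₁, q₂) ∣ lcm(f', N/f')`. -/
theorem lcm_dvd_lcm_of_latter_case
    (N f f' q₁ q₂ K : ℕ) (hN : 0 < N) (hf : 0 < f) (hf' : 0 < f')
    (hq₁ : 0 < q₁) (hq₂ : 0 < q₂) (hK : 0 < K)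
    (hfN : f ∣ N) (hf'N : f' ∣ N) (hq₁N : q₁ ∣ N / f) (hq₂f : q₂ ∣ f) (hKN : K ∣ N)
    (hK₁ : ∀ p : ℕ, p.Prime → p ∣ q₁ →
      (K.factorization p : ℤ) ≤ (f.factorization p : ℤ) - (q₂.factorization p : ℤ))
    (hK₂ : ∀ p : ℕ, p.Prime → p ∣ q₂ → ¬p ∣ q₁ →
      (K.factorization p : ℤ) ≤ (N.factorization p : ℤ) - (q₂.factorization p : ℤ))
    (hq₁f' : q₁ ∣ f')
    (hval : ∀ p : ℕ, p.Prime → p ∣ q₂ →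
      f'.factorization p ≤ q₁.factorization p + K.factorization p) :
    Nat.lcm q₁ q₂ ∣ Nat.lcm f' (N / f') := by
  have hNf : N / f ≠ 0 := (Nat.div_pos (Nat.le_of_dvd hN hfN) hf).ne'
  have hNf' : N / f' ≠ 0 := (Nat.div_pos (Nat.le_of_dvd hN hf'N) hf').ne'
  have key : q₂ ∣ N / f' := by
    rw [← Nat.factorization_prime_le_iff_dvd hq₂.ne' hNf']
    intro p hp
    by_cases h2 : p ∣ q₂
    · have hv := hval p hp h2
      have e' : (N / f').factorization p = N.factorization p - f'.factorization p := by
        rw [Nat.factorization_div hf'N]; rfl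
      have e : (N / f).factorization p = N.factorization p - f.factorization p := by
        rw [Nat.factorization_div hfN]; rfl
      have hq := (Nat.factorization_le_iff_dvd hq₁.ne' hNf).2 hq₁N p
      have hfle := (Nat.factorization_le_iff_dvd hf.ne' hN.ne').2 hfN p
      by_cases h1 : p ∣ q₁
      · have := hK₁ p hp h1
        omega
      · have := hK₂ p hp h2 h1
        have := Nat.factorization_eq_zero_of_not_dvd h1
        omega
    · rw [Nat.factorization_eq_zero_of_not_dvd h2]
      exact Nat.zero_le _
  exact Nat.lcm_dvd (hq₁f'.trans (Nat.dvd_lcm_left _ _)) (key.trans (Nat.dvd_lcm_right _ _))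
end

section
/- Let G be a group acting on a set X, let H be a subgroup of G, and let a, b ∈ X. Consider the set S of right cosets Hγ in H\G such that γ·b lies in the H-orbit of a (this condition is independent of the coset representative γ). If a does not lie in the G-orbit of b, then S is empty; if a lies in the G-orbit of b, then S is in bijection with the right coset space (Stab_G(a) ∩ H)\Stab_G(a), where Stab_G(a) denotes the stabilizer of a in G. -/
/-- Lemma 2.6 (orbit–stabilizer form): for a group `G` acting on `X`, a subgroup `H ≤ G` and
`a, b ∈ X`, consider the set `S` of right cosets `Hγ` such that `γ·b` lies in the `H`-orbit
of `a`. If `a` is not in the `G`-orbit of `b` then `S` is empty; otherwise `S` is in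
bijection with the right coset space `(Stab_G(a) ∩ H)\Stab_G(a)`. -/
theorem coset_set_empty_or_equiv
    {G : Type*} [Group G] {X : Type*} [MulAction G X] (H : Subgroup G) (a b : X)
    (S : Set (Quotient (QuotientGroup.rightRel H)))
    (hS : S = {x | ∃ γ : G, x = Quotient.mk (QuotientGroup.rightRel H) γ ∧
      γ • b ∈ MulAction.orbit H a}) :
    (a ∉ MulAction.orbit G b → S = ∅) ∧
    (a ∈ MulAction.orbit G b →
      Nonempty (S ≃ Quotient (QuotientGroup.rightRel
        ((MulAction.stabilizer G a ⊓ H).subgroupOf (MulAction.stabilizer G a))))) := by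
  subst hS
  constructor
  · intro ha
    ext x
    simp only [Set.mem_setOf_eq, Set.mem_empty_iff_false, iff_false]
    rintro ⟨γ, -, ⟨h, hh⟩⟩
    apply ha
    refine ⟨(h : G)⁻¹ * γ, ?_⟩
    have hh1 : (h : G) • a = γ • b := hh
    change ((h : G)⁻¹ * γ) • b = a
    rw [mul_smul, ← hh1, inv_smul_smul]
  · rintro ⟨g, hg⟩
    have hg1 : g • b = a := hg
    refine ⟨(Equiv.ofBijective (fun q => Quotient.liftOn q
      (fun s : MulAction.stabilizer G a =>
        (⟨Quotient.mk (QuotientGroup.rightRel H) ((s : G) * g), (s : G) * g, rfl, ?_⟩ :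
          {x | ∃ γ : G, x = Quotient.mk (QuotientGroup.rightRel H) γ ∧
            γ • b ∈ MulAction.orbit H a})) ?_) ⟨?_, ?_⟩).symm⟩
    · rw [mul_smul, hg1, MulAction.mem_stabilizer_iff.mp s.2]
      exact MulAction.mem_orbit_self a
    · intro s t hst
      have h1 := QuotientGroup.rightRel_apply.mp hst
      rw [Subgroup.mem_subgroupOf] at h1
      apply Subtype.ext
      apply Quotient.sound
      apply QuotientGroup.rightRel_apply.mpr
      have h2 : (t : G) * (s : G)⁻¹ ∈ H := h1.2
      simpa [mul_assoc] using h2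
    · intro p q
      induction p using Quotient.inductionOn with | _ s
      induction q using Quotient.inductionOn with | _ t
      intro hst
      have h1 := QuotientGroup.rightRel_apply.mp (Quotient.exact (congrArg Subtype.val hst))
      apply Quotient.sound
      apply QuotientGroup.rightRel_apply.mpr
      rw [Subgroup.mem_subgroupOf]
      refine ⟨(t * s⁻¹).2, ?_⟩
      simpa [mul_assoc] using h1
    · rintro ⟨x, γ, rfl, ⟨h, hh⟩⟩
      have hh1 : (h : G) • a = γ • b := hh
      refine ⟨Quotient.mk _ ⟨(h : G)⁻¹ * γ * g⁻¹, ?_⟩, ?_⟩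
      · rw [MulAction.mem_stabilizer_iff, mul_smul, mul_smul, ← hg1, inv_smul_smul, ← hh1,
          inv_smul_smul, hg1]
      · apply Subtype.ext
        apply Quotient.sound
        apply QuotientGroup.rightRel_apply.mpr
        simp [mul_assoc]
end
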